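/- For all nonzero integers n, m there exists a polynomial h ∈ ℤ[S,T] in two variables such that for all x, y ∈ SL(2,ℂ): tr(xⁿ·yᵐ) = sgn(n)·sgn(m)·φ_{|n|}(tr x)·φ_{|m|}(tr y)·tr(xy) + h(tr x, tr y), where sgn denotes the sign of an integer. -/

import Mathlib

open Matrix

abbrev SL2C := Matrix.SpecialLinearGroup (Fin 2) ℂ

noncomputable def tr2 (x : SL2C) : ℂ := Matrix.trace (x : Matrix (Fin 2) (Fin 2) ℂ)

/-- `φ_k`, the Dickson polynomial of the second kind `E_{k-1}(X,1)`:
`φ_1 = 1`, `φ_2 = X`, `φ_{k+1} = X·φ_k − φ_{k−1}`. -/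
noncomputable def phi (k : ℕ) : Polynomial ℂ := Polynomial.dickson 2 (1 : ℂ) (k - 1)

/-!
Since `x + x⁻¹ = tr x • 1`, multiplying by `x` or by `x⁻¹` preserves the span of `x` and `1`. The
coefficients of `xⁿ` follow the recurrence of the rescaled Chebyshev polynomials `Sₖ` of the second
kind, so `xⁿ = Sₙ₋₁(tr x) • x - Sₙ₋₂(tr x) • 1` for every `n ∈ ℤ`. In the trace of the expanded
product `xⁿ * yᵐ`, only the product of the leading terms sees `tr (x * y)`. The signs come from the
symmetry `S₋ₙ₋₁ = -Sₙ₋₁`, together with `φ_k = Sₖ₋₁` for `k ≥ 1`.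
-/

section Chebyshev

open Polynomial Polynomial.Chebyshev

theorem chebyshev_S_sub_one_eq_sign_mul_natAbs (R : Type*) [CommRing R] (n : ℤ) :
    S R (n - 1) = (n.sign : R[X]) * S R (n.natAbs - 1) := by
  rcases lt_trichotomy n 0 with hn | rfl | hn
  · rw [Int.sign_eq_neg_one_of_neg hn, Int.ofNat_natAbs_of_nonpos hn.le, S_neg_sub_one]
    simp
  · simp
  · rw [Int.sign_eq_one_of_pos hn, Int.natAbs_of_nonneg hn.le]
    simp

theorem sign_mul_eval_phi (n : ℤ) (t : ℂ) :
    (n.sign : ℂ) * (phi n.natAbs).eval t = (S ℂ (n - 1)).eval t := by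
  rcases eq_or_ne n 0 with rfl | hn
  · simp
  · rw [chebyshev_S_sub_one_eq_sign_mul_natAbs, eval_mul, eval_intCast, phi,
      dickson_two_one_eq_chebyshev_S, Nat.cast_pred (Int.natAbs_pos.mpr hn)]

theorem mvPolynomial_aeval_eval_X_chebyshev_S {σ R R' : Type*} [CommRing R] [CommRing R']
    [Algebra R R'] (f : σ → R') (i : σ) (n : ℤ) :
    MvPolynomial.aeval f ((S (MvPolynomial σ R) n).eval (MvPolynomial.X i)) =
      (S R' n).eval (f i) := by
  rw [← aeval_S (R := R), ← aeval_algHom_apply, MvPolynomial.aeval_X, aeval_S]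

theorem units_zpow_eq_chebyshev_S {R A : Type*} [CommRing R] [Ring A] [Algebra R A] {u : Aˣ} {t : R}
    (h : (u : A) + ↑u⁻¹ = t • 1) (n : ℤ) :
    (↑(u ^ n) : A) = (S R (n - 1)).eval t • (u : A) - (S R (n - 2)).eval t • 1 := by
  have inv_eq : (↑u⁻¹ : A) = t • 1 - u := eq_sub_of_add_eq' h
  have sq_eq : (u : A) * u = t • (u : A) - 1 := by
    rw [eq_sub_iff_add_eq, ← u.mul_inv, ← mul_add, h, mul_smul_comm, mul_one]
  induction n with
  | zero => simp
  | succ n ih =>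
    have S_recurrence : (S R n).eval t = t * (S R (n - 1)).eval t - (S R (n - 2)).eval t := by
      rw [S_eq, eval_sub, eval_mul, eval_X]
    rw [_root_.zpow_add_one, Units.val_mul, ih, sub_mul, smul_mul_assoc, smul_mul_assoc, sq_eq,
      one_mul, add_sub_cancel_right, S_recurrence, show (n : ℤ) + 1 - 2 = n - 1 by ring]
    module
  | pred n ih =>
    have S_recurrence : (S R (-n - 1 - 2)).eval t =
        t * (S R (-n - 2)).eval t - (S R (-n - 1)).eval t := by
      rw [sub_right_comm, S_sub_one, eval_sub, eval_mul, eval_X]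
      ring_nf
    rw [_root_.zpow_sub_one, Units.val_mul, ih, sub_mul, smul_mul_assoc, smul_mul_assoc, u.mul_inv,
      one_mul, inv_eq, S_recurrence, show (-n : ℤ) - 1 - 1 = -n - 2 by ring]
    module

end Chebyshev

section SpecialLinearGroup

open Polynomial.Chebyshev
open scoped MatrixGroups

theorem sl2_coe_add_coe_inv {R : Type*} [CommRing R] (x : SL(2, R)) :
    x.val + x⁻¹.val = x.val.trace • 1 := by
  rw [Matrix.SpecialLinearGroup.coe_inv, adjugate_fin_two, trace_fin_two]
  ext i j
  fin_cases i <;> fin_cases j <;> simp [add_comm]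

theorem sl2_coe_zpow_eq_chebyshev_S {R : Type*} [CommRing R] (x : SL(2, R)) (n : ℤ) :
    (x ^ n).val =
      (S R (n - 1)).eval x.val.trace • x.val - (S R (n - 2)).eval x.val.trace • 1 := by
  have h := units_zpow_eq_chebyshev_S (u := x.toGL) (sl2_coe_add_coe_inv x) n
  rwa [← map_zpow] at h

theorem sl2_trace_zpow_mul_zpow {R : Type*} [CommRing R] (x y : SL(2, R)) (n m : ℤ) :
    (x ^ n * y ^ m).val.trace =
      (S R (n - 1)).eval x.val.trace * (S R (m - 1)).eval y.val.trace * (x * y).val.trace +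
      (2 * (S R (n - 2)).eval x.val.trace * (S R (m - 2)).eval y.val.trace -
        (S R (n - 1)).eval x.val.trace * (S R (m - 2)).eval y.val.trace * x.val.trace -
        (S R (n - 2)).eval x.val.trace * (S R (m - 1)).eval y.val.trace * y.val.trace) := by
  simp only [Matrix.SpecialLinearGroup.coe_mul, sl2_coe_zpow_eq_chebyshev_S, sub_mul, mul_sub,
    smul_mul_assoc, mul_smul_comm, one_mul, mul_one, trace_sub, trace_smul, trace_one, smul_eq_mul,
    Fintype.card_fin, Nat.cast_ofNat]
  ring

theorem trace_power_product_general (n m : ℤ) :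
    ∃ h : MvPolynomial (Fin 2) ℤ, ∀ (R : Type*) [CommRing R] (x y : SL(2, R)),
      (x ^ n * y ^ m).val.trace =
        (S R (n - 1)).eval x.val.trace * (S R (m - 1)).eval y.val.trace * (x * y).val.trace +
          MvPolynomial.aeval ![x.val.trace, y.val.trace] h := by
  let SX (k : ℤ) : MvPolynomial (Fin 2) ℤ := (S _ k).eval (MvPolynomial.X 0)
  let SY (k : ℤ) : MvPolynomial (Fin 2) ℤ := (S _ k).eval (MvPolynomial.X 1)
  refine ⟨2 * SX (n - 2) * SY (m - 2) - SX (n - 1) * SY (m - 2) * MvPolynomial.X 0 -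
    SX (n - 2) * SY (m - 1) * MvPolynomial.X 1, fun R _ x y => ?_⟩
  rw [sl2_trace_zpow_mul_zpow]
  simp [SX, SY, mvPolynomial_aeval_eval_X_chebyshev_S]

end SpecialLinearGroup

/-- `tr (xⁿ yᵐ) = sgn(n)·sgn(m)·φ_{|n|}(tr x)·φ_{|m|}(tr y)·tr(xy) + h(tr x, tr y)`
for some `h ∈ ℤ[S,T]`. -/
theorem trace_power_product (n m : ℤ) (hn : n ≠ 0) (hm : m ≠ 0) :
    ∃ h : MvPolynomial (Fin 2) ℤ,
      ∀ x y : SL2C,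
        tr2 (x ^ n * y ^ m) =
          (n.sign : ℂ) * (m.sign : ℂ) *
            Polynomial.eval (tr2 x) (phi n.natAbs) *
            Polynomial.eval (tr2 y) (phi m.natAbs) * tr2 (x * y)
          + MvPolynomial.aeval ![tr2 x, tr2 y] h := by
  obtain ⟨h, trace_eq⟩ := trace_power_product_general n m
  refine ⟨h, fun x y => (trace_eq ℂ x y).trans ?_⟩
  rw [← sign_mul_eval_phi, ← sign_mul_eval_phi, mul_mul_mul_comm, ← mul_assoc (_ * _)]
  rfl
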